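/- At every point (r,v) of phase space with A(r,v) ≠ 0, the magnitude ‖A‖ of the Laplace–Runge–Lenz vector satisfies the Poisson bracket relations {E, ‖A‖}(r,v) = 0, {L_i, ‖A‖}(r,v) = 0 for each i ∈ {1,2,3}, and {A_i, ‖A‖}(r,v) = −2 E(r,v) ‖A(r,v)‖⁻¹ (A(r,v) × L(r,v))_i for each i ∈ {1,2,3}. -/

import Mathlib

/-!
By the chain rule `∇‖A‖ = ‖A‖⁻¹ ∑ⱼ Aⱼ ∇Aⱼ` wherever `A ≠ 0`, so that
`{F, ‖A‖} = ‖A‖⁻¹ ∑ⱼ Aⱼ {F, Aⱼ}` for every `F` (`pb_norm_lrl`). The three claims then follow from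
the classical relations `{E, Aⱼ} = 0`, `{Lᵢ, Aⱼ} = ∑ₖ εᵢⱼₖ Aₖ` and
`{Aᵢ, Aⱼ} = -2E ∑ₖ εᵢⱼₖ Lₖ`: in the second case the contraction of `εᵢⱼₖ` with `Aⱼ Aₖ` vanishes by
antisymmetry, and in the third one it is a component of `A × L`.

The classical relations are read off from explicit gradients. For `A` these are computed from the
expanded form `A = ‖v‖² r - (r · v) v - κ r / ‖r‖` (`lrl_apply`); what remains are polynomial
identities in the coordinates and in `‖r‖⁻¹`, modulo `‖r‖⁻² (r₀² + r₁² + r₂²) = 1`.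
-/

noncomputable section

/-- Physical 3-space. -/
abbrev E3 : Type := EuclideanSpace ℝ (Fin 3)

/-- Build a vector in `E3` from its components. -/
def toE3 (f : Fin 3 → ℝ) : E3 := (EuclideanSpace.equiv (Fin 3) ℝ).symm f

/-- Cross product in `ℝ³`. -/
def cross (a b : E3) : E3 :=
  toE3 ![a 1 * b 2 - a 2 * b 1, a 2 * b 0 - a 0 * b 2, a 0 * b 1 - a 1 * b 0]

/-- Dot product in `ℝ³`. -/
def dot (a b : E3) : ℝ := ∑ i, a i * b i

/-- Gradient in the `r` variable of a function on phase space. -/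
def gradR (F : E3 × E3 → ℝ) (p : E3 × E3) : E3 := gradient (fun x => F (x, p.2)) p.1

/-- Gradient in the `v` variable of a function on phase space. -/
def gradV (F : E3 × E3 → ℝ) (p : E3 × E3) : E3 := gradient (fun y => F (p.1, y)) p.2

/-- Poisson bracket of two functions on phase space. -/
def pb (F G : E3 × E3 → ℝ) (p : E3 × E3) : ℝ :=
  dot (gradR F p) (gradV G p) - dot (gradR G p) (gradV F p)

/-- Energy `E(r,v) = (1/2)‖v‖² − κ/‖r‖`. -/
def energy (κ : ℝ) (p : E3 × E3) : ℝ := (1/2) * ‖p.2‖^2 - κ / ‖p.1‖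

/-- Angular momentum `L(r,v) = r × v`. -/
def angMom (p : E3 × E3) : E3 := cross p.1 p.2

/-- Laplace–Runge–Lenz vector `A(r,v) = v × L − κ r/‖r‖`. -/
def lrl (κ : ℝ) (p : E3 × E3) : E3 := cross p.2 (angMom p) - (κ / ‖p.1‖) • p.1

/-- LRL direction vector `Θ = A/‖A‖`. -/
def lrlDir (κ : ℝ) (p : E3 × E3) : E3 := ‖lrl κ p‖⁻¹ • lrl κ p

/-- Levi-Civita symbol `ε_{ijk}` on indices in `{0,1,2}`. -/
def eps (i j k : Fin 3) : ℝ :=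
  (((j : ℕ) : ℝ) - ((i : ℕ) : ℝ)) * (((k : ℕ) : ℝ) - ((i : ℕ) : ℝ))
    * (((k : ℕ) : ℝ) - ((j : ℕ) : ℝ)) / 2

@[simp] lemma toE3_apply (f : Fin 3 → ℝ) (i : Fin 3) : toE3 f i = f i := rfl

lemma norm_sq_eq (x : E3) : ‖x‖ ^ 2 = x 0 ^ 2 + x 1 ^ 2 + x 2 ^ 2 := by
  rw [EuclideanSpace.norm_sq_eq]
  simp [Fin.sum_univ_three]

lemma lrl_apply (κ : ℝ) (r v : E3) (j : Fin 3) :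
    lrl κ (r, v) j = (v 0 ^ 2 + v 1 ^ 2 + v 2 ^ 2) * r j
      - (r 0 * v 0 + r 1 * v 1 + r 2 * v 2) * v j - κ * (‖r‖⁻¹ * r j) := by
  fin_cases j <;> simp [lrl, angMom, cross] <;> ring

/-- A Fréchet derivative is represented by the vector of its values on the standard basis. -/
lemma hasGradientAt_of_hasFDerivAt {f : E3 → ℝ} {f' : E3 →L[ℝ] ℝ} {x g : E3}
    (h : HasFDerivAt f f' x) (hg : ∀ w, f' w = g 0 * w 0 + g 1 * w 1 + g 2 * w 2) :
    HasGradientAt f g x := by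
  rw [hasGradientAt_iff_hasFDerivAt]
  refine h.congr_fderiv ?_
  ext w
  rw [hg]
  simp [PiLp.inner_apply, Fin.sum_univ_three]
  ring

lemma hasFDerivAt_coord (x : E3) (j : Fin 3) :
    HasFDerivAt (fun y : E3 => y j) (EuclideanSpace.proj j : E3 →L[ℝ] ℝ) x :=
  (EuclideanSpace.proj j : E3 →L[ℝ] ℝ).hasFDerivAt

lemma inner_dual_apply (g w : E3) :
    (InnerProductSpace.toDual ℝ E3 g) w = g 0 * w 0 + g 1 * w 1 + g 2 * w 2 := by
  simp [PiLp.inner_apply, Fin.sum_univ_three]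
  ring

/-- The chain rule `∇‖F‖ = ‖F‖⁻¹ ∑ⱼ Fⱼ ∇Fⱼ` for a vector field `F` that does not vanish at `x`. -/
lemma hasGradientAt_norm_comp {F : E3 → E3} {g : Fin 3 → E3} {x : E3}
    (h : ∀ j, HasGradientAt (fun y => F y j) (g j) x) (h0 : F x ≠ 0) :
    HasGradientAt (fun y => ‖F y‖) (‖F x‖⁻¹ • ∑ j, F x j • g j) x := by
  have hn : ‖F x‖ ≠ 0 := norm_ne_zero_iff.mpr h0
  have hs : (fun y => ‖F y‖) = fun y => √(F y 0 ^ 2 + F y 1 ^ 2 + F y 2 ^ 2) := by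
    funext y
    rw [← norm_sq_eq, Real.sqrt_sq (norm_nonneg _)]
  have hx : √(F x 0 ^ 2 + F x 1 ^ 2 + F x 2 ^ 2) = ‖F x‖ := by
    rw [← norm_sq_eq, Real.sqrt_sq (norm_nonneg _)]
  have h' := fun j => (h j).hasFDerivAt
  have hd := ((((h' 0).pow 2).add ((h' 1).pow 2)).add ((h' 2).pow 2)).sqrt
    (by simpa [← norm_sq_eq] using hn)
  rw [hs]
  refine hasGradientAt_of_hasFDerivAt hd fun w => ?_
  simp only [smul_apply, add_apply, inner_dual_apply,
    Fin.sum_univ_three, PiLp.smul_apply, PiLp.add_apply, smul_eq_mul, Pi.add_apply, hx]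
  simp
  field_simp
  ring

lemma hasFDerivAt_inv_norm {r : E3} (hr : r ≠ 0) :
    HasFDerivAt (fun x : E3 => ‖x‖⁻¹) (-(‖r‖⁻¹ ^ 3) • InnerProductSpace.toDual ℝ E3 r) r := by
  have hn : ‖r‖ ≠ 0 := norm_ne_zero_iff.mpr hr
  have h := hasGradientAt_norm_comp (F := fun y : E3 => y)
    (g := fun j => EuclideanSpace.single j 1) (x := r)
    (fun j => hasGradientAt_of_hasFDerivAt (hasFDerivAt_coord r j)
      (by intro w; fin_cases j <;> simp)) hr
  have h2 := (hasDerivAt_inv hn).comp_hasFDerivAt r h.hasFDerivAt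
  refine h2.congr_fderiv ?_
  ext w
  simp only [smul_apply, inner_dual_apply]
  simp [Fin.sum_univ_three]
  field_simp

/-! ### Explicit gradients -/

lemma gradR_lrl (κ : ℝ) {r : E3} (v : E3) (hr : r ≠ 0) (j : Fin 3) :
    HasGradientAt (fun x => lrl κ (x, v) j)
      ((v 0 ^ 2 + v 1 ^ 2 + v 2 ^ 2 - κ * ‖r‖⁻¹) • EuclideanSpace.single j 1
        - v j • v + (κ * ‖r‖⁻¹ ^ 3 * r j) • r) r := by
  simp only [lrl_apply]
  have c := hasFDerivAt_coord r
  refine hasGradientAt_of_hasFDerivAt ((((c j).const_mul _).sub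
    (((((c 0).mul_const (v 0)).add ((c 1).mul_const (v 1))).add
      ((c 2).mul_const (v 2))).mul_const (v j))).sub
    (((hasFDerivAt_inv_norm hr).mul (c j)).const_mul κ)) fun w => ?_
  simp only [smul_apply, add_apply,
    sub_apply, inner_dual_apply]
  fin_cases j <;> simp <;> ring

lemma gradV_lrl (κ : ℝ) (r v : E3) (j : Fin 3) :
    HasGradientAt (fun y => lrl κ (r, y) j)
      ((2 * r j) • v - v j • r
        - (r 0 * v 0 + r 1 * v 1 + r 2 * v 2) • EuclideanSpace.single j 1) v := by
  simp only [lrl_apply]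
  have c := hasFDerivAt_coord v
  refine hasGradientAt_of_hasFDerivAt (((((((c 0).pow 2).add ((c 1).pow 2)).add
    ((c 2).pow 2)).mul_const (r j)).sub
    (((((c 0).const_mul (r 0)).add ((c 1).const_mul (r 1))).add
      ((c 2).const_mul (r 2))).mul (c j))).sub_const _) fun w => ?_
  simp only [smul_apply, add_apply,
    sub_apply]
  fin_cases j <;> simp <;> ring

lemma gradR_energy (κ : ℝ) {r : E3} (v : E3) (hr : r ≠ 0) :
    HasGradientAt (fun x => energy κ (x, v)) ((κ * ‖r‖⁻¹ ^ 3) • r) r := by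
  simp only [energy, div_eq_mul_inv κ]
  refine hasGradientAt_of_hasFDerivAt
    (((hasFDerivAt_inv_norm hr).const_mul κ).const_sub _) fun w => ?_
  simp only [smul_apply, neg_apply, inner_dual_apply]
  simp
  ring

lemma gradV_energy (κ : ℝ) (r v : E3) :
    HasGradientAt (fun y => energy κ (r, y)) v v := by
  simp only [energy, norm_sq_eq]
  have c := hasFDerivAt_coord v
  refine hasGradientAt_of_hasFDerivAt ((((((c 0).pow 2).add ((c 1).pow 2)).add
    ((c 2).pow 2)).const_mul _).sub_const _) fun w => ?_
  simp only [smul_apply, add_apply]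
  simp
  ring

lemma gradR_angMom (r v : E3) (i : Fin 3) :
    HasGradientAt (fun x => angMom (x, v) i) (cross v (EuclideanSpace.single i 1)) r := by
  have c := hasFDerivAt_coord r
  fin_cases i
  · exact hasGradientAt_of_hasFDerivAt (((c 1).mul_const (v 2)).sub ((c 2).mul_const (v 1)))
      fun w => by simp [cross]; ring
  · exact hasGradientAt_of_hasFDerivAt (((c 2).mul_const (v 0)).sub ((c 0).mul_const (v 2)))
      fun w => by simp [cross]; ring
  · exact hasGradientAt_of_hasFDerivAt (((c 0).mul_const (v 1)).sub ((c 1).mul_const (v 0)))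
      fun w => by simp [cross]; ring

lemma gradV_angMom (r v : E3) (i : Fin 3) :
    HasGradientAt (fun y => angMom (r, y) i) (cross (EuclideanSpace.single i 1) r) v := by
  have c := hasFDerivAt_coord v
  fin_cases i
  · exact hasGradientAt_of_hasFDerivAt (((c 2).const_mul (r 1)).sub ((c 1).const_mul (r 2)))
      fun w => by simp [cross]; ring
  · exact hasGradientAt_of_hasFDerivAt (((c 0).const_mul (r 2)).sub ((c 2).const_mul (r 0)))
      fun w => by simp [cross]; ring
  · exact hasGradientAt_of_hasFDerivAt (((c 1).const_mul (r 0)).sub ((c 0).const_mul (r 1)))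
      fun w => by simp [cross]; ring

/-! ### Poisson brackets -/

lemma pb_norm_lrl (κ : ℝ) {r v : E3} (hr : r ≠ 0) (hA : lrl κ (r, v) ≠ 0)
    (F : E3 × E3 → ℝ) :
    pb F (fun p => ‖lrl κ p‖) (r, v)
      = ‖lrl κ (r, v)‖⁻¹ * ∑ j, lrl κ (r, v) j * pb F (fun p => lrl κ p j) (r, v) := by
  have h1 : ∀ j, gradR (fun p => lrl κ p j) (r, v) = _ := fun j => (gradR_lrl κ v hr j).gradient
  have h2 : ∀ j, gradV (fun p => lrl κ p j) (r, v) = _ := fun j => (gradV_lrl κ r v j).gradient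
  have h3 : gradR (fun p => ‖lrl κ p‖) (r, v) = _ :=
    (hasGradientAt_norm_comp (F := fun x => lrl κ (x, v)) (gradR_lrl κ v hr) hA).gradient
  have h4 : gradV (fun p => ‖lrl κ p‖) (r, v) = _ :=
    (hasGradientAt_norm_comp (F := fun y => lrl κ (r, y)) (gradV_lrl κ r v) hA).gradient
  simp only [← h1] at h3
  simp only [← h2] at h4
  simp only [pb, dot, h3, h4, Fin.sum_univ_three, PiLp.smul_apply, PiLp.add_apply, smul_eq_mul]
  ring

lemma inv_norm_sq_mul {r : E3} (hr : r ≠ 0) :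
    ‖r‖⁻¹ ^ 2 * (r 0 ^ 2 + r 1 ^ 2 + r 2 ^ 2) = 1 := by
  have hn : ‖r‖ ≠ 0 := norm_ne_zero_iff.mpr hr
  rw [← norm_sq_eq]
  field_simp

lemma pb_energy_lrl (κ : ℝ) {r : E3} (v : E3) (hr : r ≠ 0) (j : Fin 3) :
    pb (energy κ) (fun p => lrl κ p j) (r, v) = 0 := by
  have h1 : gradR (fun p => lrl κ p j) (r, v) = _ := (gradR_lrl κ v hr j).gradient
  have h2 : gradV (fun p => lrl κ p j) (r, v) = _ := (gradV_lrl κ r v j).gradient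
  have h3 : gradR (energy κ) (r, v) = _ := (gradR_energy κ v hr).gradient
  have h4 : gradV (energy κ) (r, v) = _ := (gradV_energy κ r v).gradient
  have hs := inv_norm_sq_mul hr
  rw [pb, h1, h2, h3, h4]
  generalize ‖r‖⁻¹ = s at *
  fin_cases j <;> simp [dot, Fin.sum_univ_three]
  · linear_combination (-κ * s * v 0) * hs
  · linear_combination (-κ * s * v 1) * hs
  · linear_combination (-κ * s * v 2) * hs

lemma pb_angMom_lrl (κ : ℝ) {r : E3} (v : E3) (hr : r ≠ 0) (i j : Fin 3) :
    pb (fun p => angMom p i) (fun p => lrl κ p j) (r, v)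
      = ∑ k, eps i j k * lrl κ (r, v) k := by
  have h1 : gradR (fun p => lrl κ p j) (r, v) = _ := (gradR_lrl κ v hr j).gradient
  have h2 : gradV (fun p => lrl κ p j) (r, v) = _ := (gradV_lrl κ r v j).gradient
  have h3 : gradR (fun p => angMom p i) (r, v) = _ := (gradR_angMom r v i).gradient
  have h4 : gradV (fun p => angMom p i) (r, v) = _ := (gradV_angMom r v i).gradient
  rw [pb, h1, h2, h3, h4]
  simp only [lrl_apply]
  generalize ‖r‖⁻¹ = s at *
  fin_cases i <;> fin_cases j <;>
    simp [dot, Fin.sum_univ_three, cross, eps] <;> ring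

lemma pb_lrl_lrl (κ : ℝ) {r : E3} (v : E3) (hr : r ≠ 0) (i j : Fin 3) :
    pb (fun p => lrl κ p i) (fun p => lrl κ p j) (r, v)
      = -2 * energy κ (r, v) * ∑ k, eps i j k * angMom (r, v) k := by
  have h1 : ∀ j, gradR (fun p => lrl κ p j) (r, v) = _ := fun j => (gradR_lrl κ v hr j).gradient
  have h2 : ∀ j, gradV (fun p => lrl κ p j) (r, v) = _ := fun j => (gradV_lrl κ r v j).gradient
  have hs := inv_norm_sq_mul hr
  rw [pb, h1, h2, h1, h2, energy, div_eq_mul_inv κ]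
  simp only [norm_sq_eq v]
  generalize ‖r‖⁻¹ = s at *
  -- The only use of `hs` is to replace `s ^ 3 * ‖r‖ ^ 2` by `s`; its coefficient is the
  -- contribution of `∇_r ‖r‖⁻¹` paired with the `r`-part of `∇_v A`.
  have key : ∀ a : ℝ, κ * s * a * (s ^ 2 * (r 0 ^ 2 + r 1 ^ 2 + r 2 ^ 2)) = κ * s * a :=
    fun a => by rw [hs, mul_one]
  have k := key (r i * v j - r j * v i)
  fin_cases i <;> fin_cases j <;>
    simp [dot, Fin.sum_univ_three, cross, eps, angMom] at k ⊢ <;> linear_combination (-1) * k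

/-- At points where `A ≠ 0`: `{E,‖A‖} = 0`, `{L_i,‖A‖} = 0`, and
`{A_i,‖A‖} = −2E‖A‖⁻¹ (A × L)_i`. -/
theorem poisson_with_lrl_norm (κ : ℝ) (hκ : 0 < κ)
    (r v : E3) (hr : r ≠ 0) (hA : lrl κ (r, v) ≠ 0) :
    pb (energy κ) (fun p => ‖lrl κ p‖) (r, v) = 0 ∧
    (∀ i : Fin 3, pb (fun p => angMom p i) (fun p => ‖lrl κ p‖) (r, v) = 0) ∧
    (∀ i : Fin 3,
      pb (fun p => lrl κ p i) (fun p => ‖lrl κ p‖) (r, v)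
        = -2 * energy κ (r, v) * ‖lrl κ (r, v)‖⁻¹
            * cross (lrl κ (r, v)) (angMom (r, v)) i) := by
  refine ⟨?_, fun i => ?_, fun i => ?_⟩
  · rw [pb_norm_lrl κ hr hA]
    simp [pb_energy_lrl κ v hr]
  · rw [pb_norm_lrl κ hr hA]
    simp only [pb_angMom_lrl κ v hr]
    fin_cases i <;> simp [Fin.sum_univ_three, eps] <;> right <;> ring
  · rw [pb_norm_lrl κ hr hA]
    simp only [pb_lrl_lrl κ v hr]
    fin_cases i <;> simp [Fin.sum_univ_three, eps, cross] <;> ring
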